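/- For every p with 2 ≤ p ≤ ∞ there exist a constant C and an integer L₀ ≥ 0, depending only on γ and p, such that for every integer j ≥ 1, every l ∈ ℕ with l ≥ L₀, every u ∈ [1,2], and every Schwartz function f on ℝ², ‖m_j^l(u,D) f‖_{L^p(ℝ²)} ≤ C 2^{−j/p} ‖f‖_{L^p(ℝ²)}; in particular the constant C is uniform in l and u. -/

import Mathlib

open MeasureTheory Set Filter ENNReal NNReal

/-- The rescaled curve `γ_l(t) = γ(2^{-l} t)/γ(2^{-l})`. -/
noncomputable def gammaZ (γ : ℝ → ℝ) (l : ℤ) (t : ℝ) : ℝ :=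
  γ ((2 : ℝ) ^ (-l) * t) / γ ((2 : ℝ) ^ (-l))

/-- The Fourier transform on `ℝ²`. -/
noncomputable def ft (f : ℝ × ℝ → ℂ) (ξ : ℝ × ℝ) : ℂ :=
  ∫ x : ℝ × ℝ, Complex.exp (-2 * Real.pi * Complex.I * (x.1 * ξ.1 + x.2 * ξ.2)) * f x

/-- The inverse Fourier transform on `ℝ²`. -/
noncomputable def ftInv (f : ℝ × ℝ → ℂ) (x : ℝ × ℝ) : ℂ :=
  ∫ ξ : ℝ × ℝ, Complex.exp (2 * Real.pi * Complex.I * (x.1 * ξ.1 + x.2 * ξ.2)) * f ξ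

/-- The Fourier multiplier operator `a(D)f = (a f̂)^∨` with symbol `a`. -/
noncomputable def op (a : ℝ × ℝ → ℂ) (f : ℝ × ℝ → ℂ) : ℝ × ℝ → ℂ :=
  ftInv (fun ξ => a ξ * ft f ξ)

/-- The localized multiplier `m_j^l(u,ξ)`. -/
noncomputable def mjl (γ φ : ℝ → ℝ) (j l : ℕ) (u : ℝ) (ξ : ℝ × ℝ) : ℂ :=
  ((φ ((2 : ℝ) ^ (-(j : ℤ)) * ξ.1) * φ ((2 : ℝ) ^ (-(j : ℤ)) * ξ.2) : ℝ) : ℂ) *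
    ∫ t : ℝ, Complex.exp (Complex.I * ξ.1 * t) *
      Complex.exp (Complex.I * ξ.2 * u * gammaZ γ (l : ℤ) t) * (φ t : ℂ) / t

/-!
The operator `m_j^l(u, D)` is interpolated between two estimates.

* On `L²`, Plancherel reduces matters to the size of the symbol. For `l ≥ 2` the logarithmic
  derivative bound makes `γ` doubling, so that `|t² γ''| ≳ |γ|` turns into a lower bound for
  `|γ_l''|` on `[1/2, 2]` independent of `l`. Since `|ξ₂| ≈ 2 ^ j` on the support of the cutoff,
  van der Corput's second derivative test gives a symbol of size `O(2 ^ (-j / 2))`.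
* On `L^∞`, the oscillatory integral is the Fourier transform of a finite measure on the curve and
  the cutoff is that of an integrable function, so the operator averages translates against a
  complex measure whose mass depends on `φ` only.

Real interpolation between the two yields `2 ^ (-j / p)`. It is run on Schwartz functions, with a
smooth truncation splitting `f` at each height.
-/

section Interpolation

open scoped SchwartzMap

section LayerCake

variable {X Z F : Type*} [MeasurableSpace X] [MeasurableSpace Z] {μ : Measure X} {ρ : Measure Z}
  {u : X → ℝ} {v : Z → ℝ} {p q : ℝ}

lemma lintegral_rpow_eq_lintegral_setLIntegral_rpow (hv : Measurable v) (hv0 : ∀ z, 0 ≤ v z)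
    (hq : 0 < q) (hqp : q < p) :
    ∫⁻ z, ENNReal.ofReal (v z ^ p) ∂ρ =
      ENNReal.ofReal (p - q) * ∫⁻ s in Ioi (0 : ℝ),
        (∫⁻ z in {z | s < v z}, ENNReal.ofReal (v z ^ q) ∂ρ) *
          ENNReal.ofReal (s ^ (p - q - 1)) := by
  have hw : Measurable fun z => ENNReal.ofReal (v z ^ q) := by fun_prop
  have hdensity (s : ℝ) : ∫⁻ z in {z | s < v z}, ENNReal.ofReal (v z ^ q) ∂ρ =
      ρ.withDensity (fun z => ENNReal.ofReal (v z ^ q)) {z | s < v z} :=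
    (withDensity_apply _ (measurableSet_lt measurable_const hv)).symm
  simp only [hdensity]
  rw [← lintegral_rpow_eq_lintegral_meas_lt_mul _ (.of_forall hv0) hv.aemeasurable
    (sub_pos.2 hqp), lintegral_withDensity_eq_lintegral_mul _ hw (by fun_prop)]
  refine lintegral_congr fun z => ?_
  rw [Pi.mul_apply, ← ENNReal.ofReal_mul (Real.rpow_nonneg (hv0 z) q),
    ← Real.rpow_add_of_nonneg (hv0 z) hq.le (sub_pos.2 hqp).le, add_sub_cancel]

lemma lintegral_rpow_le_of_meas_lt_le (hu : AEMeasurable u μ) (hu0 : ∀ x, 0 ≤ u x)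
    (hv : Measurable v) (hv0 : ∀ z, 0 ≤ v z) (hq : 0 < q) (hqp : q < p) {K : ℝ≥0∞} (hK : K ≠ ∞)
    (huv : ∀ s : ℝ, 0 < s → μ {x | s < u x} ≤
      K * ENNReal.ofReal (s ^ (-q)) * ∫⁻ z in {z | s < v z}, ENNReal.ofReal (v z ^ q) ∂ρ) :
    ∫⁻ x, ENNReal.ofReal (u x ^ p) ∂μ ≤
      ENNReal.ofReal (p / (p - q)) * K * ∫⁻ z, ENNReal.ofReal (v z ^ p) ∂ρ := by
  have hpq : 0 < p - q := sub_pos.2 hqp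
  rw [lintegral_rpow_eq_lintegral_meas_lt_mul μ (.of_forall hu0) hu (hq.trans hqp),
    lintegral_rpow_eq_lintegral_setLIntegral_rpow hv hv0 hq hqp]
  calc ENNReal.ofReal p * ∫⁻ s in Ioi (0 : ℝ), μ {x | s < u x} * ENNReal.ofReal (s ^ (p - 1))
      ≤ ENNReal.ofReal p * ∫⁻ s in Ioi (0 : ℝ),
          K * ((∫⁻ z in {z | s < v z}, ENNReal.ofReal (v z ^ q) ∂ρ) *
            ENNReal.ofReal (s ^ (p - q - 1))) := by
        gcongr ENNReal.ofReal p * ?_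
        refine setLIntegral_mono' measurableSet_Ioi fun s (hs : 0 < s) => ?_
        calc _ ≤ _ := mul_le_mul_left (huv s hs) _
          _ = K * ((∫⁻ z in {z | s < v z}, ENNReal.ofReal (v z ^ q) ∂ρ) *
              (ENNReal.ofReal (s ^ (-q)) * ENNReal.ofReal (s ^ (p - 1)))) := by ring
          _ = _ := by
            rw [← ENNReal.ofReal_mul (by positivity), ← Real.rpow_add hs]
            ring_nf
    _ = _ := by
        rw [lintegral_const_mul' _ _ hK, show p = p / (p - q) * (p - q) by field_simp,
          ENNReal.ofReal_mul (div_nonneg (hq.trans hqp).le hpq.le)]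
        simp only [div_mul_cancel₀ _ hpq.ne']
        ring

lemma eLpNorm_ofReal_eq_lintegral [NormedAddCommGroup F] (hp : 0 < p) (f : Z → F) :
    eLpNorm f (ENNReal.ofReal p) ρ = (∫⁻ z, ENNReal.ofReal (‖f z‖ ^ p) ∂ρ) ^ (1 / p) := by
  simp_rw [eLpNorm_eq_lintegral_rpow_enorm_toReal (by simpa using hp) ENNReal.ofReal_ne_top,
    ENNReal.toReal_ofReal hp.le, ← ofReal_norm,
    ENNReal.ofReal_rpow_of_nonneg (norm_nonneg _) hp.le]

lemma mul_eLpNorm_rpow_le_setLIntegral [NormedAddCommGroup F] {f g : Z → F}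
    (hf : Measurable fun z => ‖f z‖) {c s : ℝ} (hc : 0 < c) (hq : 0 < q)
    (hgf : ∀ z, ‖g z‖ ≤ ‖f z‖) (hg : ∀ z, ‖f z‖ ≤ s / c → g z = 0) :
    ENNReal.ofReal (c ^ q) * eLpNorm g (ENNReal.ofReal q) ρ ^ q ≤
      ∫⁻ z in {z | s < c * ‖f z‖}, ENNReal.ofReal ((c * ‖f z‖) ^ q) ∂ρ := by
  rw [eLpNorm_ofReal_eq_lintegral hq, ← ENNReal.rpow_mul, one_div_mul_cancel hq.ne',
    ENNReal.rpow_one,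
    ← lintegral_indicator (measurableSet_lt measurable_const (hf.const_mul c)),
    ← lintegral_const_mul' _ _ ENNReal.ofReal_ne_top]
  refine lintegral_mono fun z => ?_
  by_cases hz : s < c * ‖f z‖
  · rw [indicator_of_mem (by exact hz), Real.mul_rpow hc.le (norm_nonneg _),
      ENNReal.ofReal_mul (by positivity)]
    gcongr
    exact hgf z
  · simp [hg z ((le_div_iff₀' hc).2 (not_lt.1 hz)), hq.ne']

end LayerCake

section StrongType

variable {E F X G : Type*} [NormedAddCommGroup E] [NormedSpace ℝ E]
  [NormedAddCommGroup F] [InnerProductSpace ℝ F]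

lemma exists_schwartzMap_truncation [ProperSpace E] (f : 𝓢(E, F)) {h : ℝ} (hh : 0 < h) :
    ∃ g : 𝓢(E, F), (∀ x, ‖(f - g) x‖ ≤ 2 * h) ∧ (∀ x, ‖g x‖ ≤ ‖f x‖) ∧
      ∀ x, ‖f x‖ ≤ h → g x = 0 := by
  set χ : E → ℝ := fun x => Real.smoothTransition (‖f x‖ ^ 2 / h ^ 2 - 1) with hχ
  have hχ0 (x : E) : 0 ≤ χ x := Real.smoothTransition.nonneg _
  have hχ1 (x : E) : χ x ≤ 1 := Real.smoothTransition.le_one _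
  have hzero (x : E) (hx : ‖f x‖ ≤ h) : χ x • f x = 0 := by
    have : ‖f x‖ ^ 2 / h ^ 2 ≤ 1 := by
      rw [div_le_one (by positivity)]
      gcongr
    simp [hχ, Real.smoothTransition.zero_of_nonpos (sub_nonpos.2 this)]
  have hsmooth : ContDiff ℝ (⊤ : ℕ∞) fun x => χ x • f x :=
    (Real.smoothTransition.contDiff.comp
      ((((f.smooth ⊤).norm_sq ℝ).div_const _).sub contDiff_const)).smul (f.smooth ⊤)
  have hsupp : HasCompactSupport fun x => χ x • f x := by
    rw [hasCompactSupport_iff_eventuallyEq, coclosedCompact_eq_cocompact]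
    have hlim : Tendsto (fun x => ‖f x‖) (cocompact E) (nhds 0) := by
      simpa using (zero_at_infty f).norm
    filter_upwards [hlim.eventually (gt_mem_nhds hh)] with x hx using hzero x hx.le
  refine ⟨hsupp.toSchwartzMap hsmooth, fun x => ?_, fun x => ?_, hzero⟩
  · change ‖f x - χ x • f x‖ ≤ 2 * h
    rcases le_total 1 (‖f x‖ ^ 2 / h ^ 2 - 1) with hx | hx
    · simp [hχ, Real.smoothTransition.one_of_one_le hx, hh.le]
    · have hfx : ‖f x‖ ≤ 2 * h := by
        rw [sub_le_iff_le_add, div_le_iff₀ (by positivity)] at hx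
        nlinarith [norm_nonneg (f x)]
      rw [show f x - χ x • f x = (1 - χ x) • f x by module, norm_smul,
        Real.norm_of_nonneg (sub_nonneg.2 (hχ1 x))]
      exact (mul_le_of_le_one_left (norm_nonneg _) (sub_le_self 1 (hχ0 x))).trans hfx
  · change ‖χ x • f x‖ ≤ ‖f x‖
    rw [norm_smul, Real.norm_of_nonneg (hχ0 x)]
    exact mul_le_of_le_one_left (norm_nonneg _) (hχ1 x)

variable [MeasurableSpace E] [MeasurableSpace X] [NormedAddCommGroup G]
  {μ : Measure E} {ρ : Measure X} {T : 𝓢(E, F) → X → G} {A B : ℝ≥0} {q : ℝ}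

/-- Subadditivity of a not necessarily linear operator on Schwartz functions: its outputs are
measurable functions, dominated pointwise by the outputs on the summands of the input. -/
structure IsSubadditiveOperator (ρ : Measure X) (T : 𝓢(E, F) → X → G) : Prop where
  aestronglyMeasurable (f : 𝓢(E, F)) : AEStronglyMeasurable (T f) ρ
  norm_add_le (f g : 𝓢(E, F)) (x : X) : ‖T (f + g) x‖ ≤ ‖T f x‖ + ‖T g x‖

lemma IsSubadditiveOperator.ae_half_le_norm_truncation (hT : IsSubadditiveOperator ρ T)
    (hB : ∀ f, eLpNorm (T f) ∞ ρ ≤ B * eLpNorm f ∞ μ) (hB0 : 0 < B) {f g : 𝓢(E, F)} {s : ℝ}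
    (hfg : ∀ z, ‖(f - g) z‖ ≤ 2 * (s / (4 * B))) :
    ∀ᵐ x ∂ρ, s < ‖T f x‖ → s / 2 ≤ ‖T g x‖ := by
  have hsup : eLpNorm (T (f - g)) ∞ ρ ≤ ENNReal.ofReal (s / 2) := by
    calc eLpNorm (T (f - g)) ∞ ρ ≤ B * eLpNorm (f - g) ∞ μ := hB _
      _ ≤ B * ENNReal.ofReal (2 * (s / (4 * B))) := by
        gcongr
        exact eLpNormEssSup_le_of_ae_bound (.of_forall hfg)
      _ = ENNReal.ofReal (s / 2) := by
        rw [← ENNReal.ofReal_coe_nnreal, ← ENNReal.ofReal_mul B.coe_nonneg]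
        congr 1
        field_simp
        ring
  filter_upwards [ae_le_eLpNormEssSup (f := T (f - g)) (μ := ρ)] with x hx hs
  have hle : ‖T (f - g) x‖ₑ ≤ ENNReal.ofReal (s / 2) := hx.trans hsup
  have hadd := hT.norm_add_le (f - g) g x
  rw [sub_add_cancel] at hadd
  rcases le_or_gt 0 s with hs0 | hs0
  · rw [← ofReal_norm, ENNReal.ofReal_le_ofReal_iff (by positivity)] at hle
    linarith
  · linarith [norm_nonneg (T g x)]

lemma IsSubadditiveOperator.meas_lt_norm_le [ProperSpace E] [OpensMeasurableSpace E]
    (hT : IsSubadditiveOperator ρ T) (hq : 0 < q)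
    (hA : ∀ f, eLpNorm (T f) (ENNReal.ofReal q) ρ ≤ A * eLpNorm f (ENNReal.ofReal q) μ)
    (hB : ∀ f, eLpNorm (T f) ∞ ρ ≤ B * eLpNorm f ∞ μ) (hB0 : 0 < B) (f : 𝓢(E, F)) {s : ℝ}
    (hs : 0 < s) :
    ρ {x | s < ‖T f x‖} ≤ ENNReal.ofReal ((A / (2 * B)) ^ q) * ENNReal.ofReal (s ^ (-q)) *
      ∫⁻ z in {z | s < 4 * B * ‖f z‖}, ENNReal.ofReal ((4 * B * ‖f z‖) ^ q) ∂μ := by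
  have hc : (0 : ℝ) < 4 * B := by positivity
  obtain ⟨g, hfg, hgf, hg⟩ := exists_schwartzMap_truncation f (div_pos hs hc)
  have hchebyshev := meas_ge_le_mul_pow_eLpNorm_enorm ρ (p := ENNReal.ofReal q) (by simpa)
    ENNReal.ofReal_ne_top (hT.aestronglyMeasurable g) (ε := ENNReal.ofReal (s / 2))
    (by simpa using hs) (by simp)
  rw [ENNReal.toReal_ofReal hq.le] at hchebyshev
  have hconst : (ENNReal.ofReal (s / 2))⁻¹ ^ q * (A : ℝ≥0∞) ^ q =
      ENNReal.ofReal ((A / (2 * B)) ^ q) * ENNReal.ofReal (s ^ (-q)) *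
        ENNReal.ofReal ((4 * B) ^ q) := by
    rw [Real.rpow_neg hs.le, ← Real.inv_rpow hs.le, ← ENNReal.ofReal_mul (by positivity),
      ← ENNReal.ofReal_mul (by positivity), ← Real.mul_rpow (by positivity) (by positivity),
      ← Real.mul_rpow (by positivity) hc.le, ← ENNReal.ofReal_inv_of_pos (by positivity),
      ← ENNReal.mul_rpow_of_nonneg _ _ hq.le, ← ENNReal.ofReal_coe_nnreal,
      ← ENNReal.ofReal_mul (by positivity), ENNReal.ofReal_rpow_of_nonneg (by positivity) hq.le]
    congr 2
    field_simp
    ring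
  calc ρ {x | s < ‖T f x‖}
      ≤ ρ {x | ENNReal.ofReal (s / 2) ≤ ‖T g x‖ₑ} := measure_mono_ae <| by
        filter_upwards [hT.ae_half_le_norm_truncation hB hB0 hfg] with x hx hsx
        exact (ENNReal.ofReal_le_ofReal (hx hsx)).trans_eq (ofReal_norm _)
    _ ≤ (ENNReal.ofReal (s / 2))⁻¹ ^ q * (A * eLpNorm g (ENNReal.ofReal q) μ) ^ q :=
        hchebyshev.trans (by gcongr; exact hA g)
    _ ≤ _ := by
        rw [ENNReal.mul_rpow_of_nonneg _ _ hq.le, ← mul_assoc, hconst, mul_assoc]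
        gcongr
        exact mul_eLpNorm_rpow_le_setLIntegral f.continuous.norm.measurable hc hq hgf hg

lemma IsSubadditiveOperator.eLpNorm_le_of_lt [ProperSpace E] [OpensMeasurableSpace E]
    (hT : IsSubadditiveOperator ρ T) (hq : 0 < q)
    (hA : ∀ f, eLpNorm (T f) (ENNReal.ofReal q) ρ ≤ A * eLpNorm f (ENNReal.ofReal q) μ)
    (hB : ∀ f, eLpNorm (T f) ∞ ρ ≤ B * eLpNorm f ∞ μ) (hB0 : 0 < B) {p : ℝ} (hqp : q < p)
    (f : 𝓢(E, F)) :
    eLpNorm (T f) (ENNReal.ofReal p) ρ ≤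
      ENNReal.ofReal ((p / (p - q) * (2 * B) ^ (-q) * (4 * B) ^ p) ^ (1 / p)) *
        (A : ℝ≥0∞) ^ (q / p) * eLpNorm f (ENNReal.ofReal p) μ := by
  have hp : 0 < p := hq.trans hqp
  have : 0 < p - q := sub_pos.2 hqp
  have hfm : Measurable fun z => ‖f z‖ := f.continuous.norm.measurable
  have hpow := lintegral_rpow_le_of_meas_lt_le (hT.aestronglyMeasurable f).norm.aemeasurable
    (fun _ => norm_nonneg _) (hfm.const_mul (4 * (B : ℝ))) (fun _ => by positivity) hq hqp
    ENNReal.ofReal_ne_top fun s hs => hT.meas_lt_norm_le hq hA hB hB0 f hs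
  have hconst : (A : ℝ≥0∞) ^ (q / p) = ENNReal.ofReal ((A : ℝ) ^ q) ^ (1 / p) := by
    rw [← ENNReal.ofReal_rpow_of_nonneg A.coe_nonneg hq.le, ← ENNReal.rpow_mul, mul_one_div,
      ENNReal.ofReal_coe_nnreal]
  rw [eLpNorm_ofReal_eq_lintegral hp, eLpNorm_ofReal_eq_lintegral hp, hconst,
    ← ENNReal.ofReal_rpow_of_nonneg (by positivity) (by positivity),
    ← ENNReal.mul_rpow_of_nonneg _ _ (by positivity),
    ← ENNReal.mul_rpow_of_nonneg _ _ (by positivity)]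
  refine ENNReal.rpow_le_rpow (hpow.trans_eq ?_) (by positivity)
  simp_rw [Real.mul_rpow (show 0 ≤ 4 * (B : ℝ) by positivity) (norm_nonneg _),
    ENNReal.ofReal_mul (show 0 ≤ (4 * (B : ℝ)) ^ p by positivity)]
  rw [lintegral_const_mul' _ _ ENNReal.ofReal_ne_top, ← mul_assoc,
    ← ENNReal.ofReal_mul (by positivity), ← ENNReal.ofReal_mul (by positivity),
    ← ENNReal.ofReal_mul (by positivity), Real.div_rpow A.coe_nonneg (by positivity),
    Real.rpow_neg (by positivity)]
  ring_nf

lemma IsSubadditiveOperator.exists_eLpNorm_le [ProperSpace E] [OpensMeasurableSpace E] (hq : 0 < q)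
    (hB0 : 0 < B) {p : ℝ≥0∞} (hqp : ENNReal.ofReal q ≤ p) :
    ∃ K > 0, ∀ (A : ℝ≥0) (T : 𝓢(E, F) → X → G), IsSubadditiveOperator ρ T →
      (∀ f, eLpNorm (T f) (ENNReal.ofReal q) ρ ≤ A * eLpNorm f (ENNReal.ofReal q) μ) →
      (∀ f, eLpNorm (T f) ∞ ρ ≤ B * eLpNorm f ∞ μ) → ∀ f,
        eLpNorm (T f) p ρ ≤
          ENNReal.ofReal K * (A : ℝ≥0∞) ^ (q / p.toReal) * eLpNorm f p μ := by
  rcases eq_or_ne p ∞ with rfl | hp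
  · exact ⟨B, hB0, fun A T _ _ hB f => by simpa using hB f⟩
  lift p to ℝ≥0 using hp
  rw [← ENNReal.ofReal_coe_nnreal (p := p), ENNReal.toReal_ofReal p.coe_nonneg] at *
  rcases ((ENNReal.ofReal_le_ofReal_iff p.coe_nonneg).1 hqp).eq_or_lt with rfl | hlt
  · exact ⟨1, one_pos, fun A T _ hA _ f => by simpa [div_self hq.ne'] using hA f⟩
  · have : 0 < p - q := sub_pos.2 hlt
    have hp0 : 0 < (p : ℝ) := hq.trans hlt
    exact ⟨_, by positivity, fun A T hT hA hB f => hT.eLpNorm_le_of_lt hq hA hB hB0 hlt f⟩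

end StrongType

end Interpolation

section FourierMultiplier

open scoped SchwartzMap FourierTransform

/-- The plane with its Euclidean norm. `ft` and `ftInv` are transforms on `ℝ × ℝ`, which carries
the sup norm, whereas Mathlib's Fourier transform needs an inner product. -/
abbrev EuclideanPlane := WithLp 2 (ℝ × ℝ)

/-- A Schwartz function on `ℝ × ℝ`, viewed on the Euclidean plane. -/
noncomputable def toEuclideanPlane : 𝓢(ℝ × ℝ, ℂ) →L[ℂ] 𝓢(EuclideanPlane, ℂ) :=
  SchwartzMap.compCLMOfContinuousLinearEquiv ℂ (WithLp.prodContinuousLinearEquiv 2 ℝ ℝ ℝ)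

lemma ft_ofLp (f : ℝ × ℝ → ℂ) (w : EuclideanPlane) :
    ft f (WithLp.ofLp w) = 𝓕 (fun v : EuclideanPlane => f (WithLp.ofLp v)) w := by
  rw [Real.fourier_eq', ft, ← (WithLp.volume_preserving_ofLp ℝ ℝ).integral_comp
    (MeasurableEquiv.toLp 2 (ℝ × ℝ)).symm.measurableEmbedding]
  refine integral_congr_ae (.of_forall fun v => ?_)
  simp only [WithLp.prod_inner_apply, RCLike.inner_apply, conj_trivial, smul_eq_mul]
  congr 2
  push_cast
  ring

lemma ftInv_ofLp (f : ℝ × ℝ → ℂ) (w : EuclideanPlane) :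
    ftInv f (WithLp.ofLp w) = 𝓕⁻ (fun v : EuclideanPlane => f (WithLp.ofLp v)) w := by
  rw [Real.fourierInv_eq', ftInv, ← (WithLp.volume_preserving_ofLp ℝ ℝ).integral_comp
    (MeasurableEquiv.toLp 2 (ℝ × ℝ)).symm.measurableEmbedding]
  refine integral_congr_ae (.of_forall fun v => ?_)
  simp only [WithLp.prod_inner_apply, RCLike.inner_apply, conj_trivial, smul_eq_mul]
  congr 2
  push_cast
  ring

lemma ft_eq_fourier_toEuclideanPlane (f : 𝓢(ℝ × ℝ, ℂ)) (ξ : ℝ × ℝ) :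
    ft f ξ = 𝓕 (toEuclideanPlane f) (WithLp.toLp 2 ξ) := by
  rw [SchwartzMap.fourier_coe]
  exact ft_ofLp f (WithLp.toLp 2 ξ)

lemma integrable_ft (f : 𝓢(ℝ × ℝ, ℂ)) : Integrable (ft f) := by
  simp_rw [funext (ft_eq_fourier_toEuclideanPlane f)]
  exact (WithLp.volume_preserving_toLp ℝ ℝ).integrable_comp_of_integrable
    (𝓕 (toEuclideanPlane f)).integrable

lemma ftInv_ft (f : 𝓢(ℝ × ℝ, ℂ)) : ftInv (ft f) = f := by
  ext x
  have hft : (fun v : EuclideanPlane => ft f (WithLp.ofLp v)) = 𝓕 (toEuclideanPlane f) :=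
    funext fun v => ft_eq_fourier_toEuclideanPlane f (WithLp.ofLp v)
  rw [← WithLp.ofLp_toLp 2 x, ftInv_ofLp, hft, ← SchwartzMap.fourierInv_coe,
    FourierTransform.fourierInv_fourier_eq]
  rfl

lemma op_eq_fourierMultiplierCLM {a : ℝ × ℝ → ℂ} (ha : a.HasTemperateGrowth) (f : 𝓢(ℝ × ℝ, ℂ)) :
    op a f = SchwartzMap.fourierMultiplierCLM ℂ (fun w : EuclideanPlane => a (WithLp.ofLp w))
      (toEuclideanPlane f) ∘ WithLp.toLp 2 := by
  have ha' : Function.HasTemperateGrowth fun w : EuclideanPlane => a (WithLp.ofLp w) :=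
    ha.comp (WithLp.prodContinuousLinearEquiv 2 ℝ ℝ ℝ).toContinuousLinearMap.hasTemperateGrowth
  ext x
  rw [Function.comp_apply, SchwartzMap.fourierMultiplierCLM_apply, SchwartzMap.fourierInv_coe, op,
    ← WithLp.ofLp_toLp 2 x, ftInv_ofLp]
  refine congrFun (congrArg _ (funext fun w => ?_)) _
  rw [SchwartzMap.smulLeftCLM_apply_apply ha', ft_eq_fourier_toEuclideanPlane, smul_eq_mul]

lemma isSubadditiveOperator_op {a : ℝ × ℝ → ℂ} (ha : a.HasTemperateGrowth) :
    IsSubadditiveOperator volume fun f : 𝓢(ℝ × ℝ, ℂ) => op a f where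
  aestronglyMeasurable f := by
    rw [op_eq_fourierMultiplierCLM ha]
    exact (SchwartzMap.continuous _).comp
      (WithLp.prodContinuousLinearEquiv 2 ℝ ℝ ℝ).symm.continuous |>.aestronglyMeasurable
  norm_add_le f g x := by
    simp only [op_eq_fourierMultiplierCLM ha, map_add]
    exact norm_add_le _ _

lemma eLpNorm_two_fourier {V F : Type*} [NormedAddCommGroup V] [InnerProductSpace ℝ V]
    [FiniteDimensional ℝ V] [MeasurableSpace V] [BorelSpace V] [NormedAddCommGroup F]
    [InnerProductSpace ℂ F] [CompleteSpace F] (f : 𝓢(V, F)) :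
    eLpNorm (𝓕 f : 𝓢(V, F)) 2 volume = eLpNorm f 2 volume := by
  have hplancherel := SchwartzMap.norm_fourier_toL2_eq f
  rw [SchwartzMap.norm_toLp, SchwartzMap.norm_toLp] at hplancherel
  exact (ENNReal.toReal_eq_toReal_iff' (SchwartzMap.eLpNorm_lt_top _ _ _).ne
    (SchwartzMap.eLpNorm_lt_top _ _ _).ne).1 hplancherel

lemma eLpNorm_two_op_le {a : ℝ × ℝ → ℂ} (ha : a.HasTemperateGrowth) {A : ℝ≥0}
    (hA : ∀ ξ, ‖a ξ‖ ≤ A) (f : 𝓢(ℝ × ℝ, ℂ)) :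
    eLpNorm (op a f) 2 volume ≤ A * eLpNorm f 2 volume := by
  have ha' : Function.HasTemperateGrowth fun w : EuclideanPlane => a (WithLp.ofLp w) :=
    ha.comp (WithLp.prodContinuousLinearEquiv 2 ℝ ℝ ℝ).toContinuousLinearMap.hasTemperateGrowth
  have hf : eLpNorm f 2 volume =
      eLpNorm (𝓕 (toEuclideanPlane f) : 𝓢(EuclideanPlane, ℂ)) 2 volume := by
    rw [eLpNorm_two_fourier]
    exact (eLpNorm_comp_measurePreserving f.continuous.aestronglyMeasurable
      (WithLp.volume_preserving_ofLp ℝ ℝ)).symm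
  rw [op_eq_fourierMultiplierCLM ha, eLpNorm_comp_measurePreserving
    (SchwartzMap.continuous _).aestronglyMeasurable (WithLp.volume_preserving_toLp ℝ ℝ),
    ← eLpNorm_two_fourier, SchwartzMap.fourierMultiplierCLM_apply,
    FourierTransform.fourier_fourierInv_eq, hf]
  refine eLpNorm_le_nnreal_smul_eLpNorm_of_ae_le_mul (.of_forall fun w => ?_) 2
  rw [SchwartzMap.smulLeftCLM_apply_apply ha', nnnorm_smul]
  gcongr
  exact hA _

end FourierMultiplier

section PhaseAverage

open scoped SchwartzMap FourierTransform

variable {Y Z : Type*} [MeasurableSpace Y] [MeasurableSpace Z] {ν : Measure Y} {τ : Measure Z}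
  {w : Y → ℂ} {v : Z → ℂ} {Γ : Y → ℝ × ℝ} {Δ : Z → ℝ × ℝ}

/-- The Fourier transform of the image under `Γ` of the complex measure `w ν`, normalised with the
phase `ξ · Γ` so that multipliers given by oscillatory integrals along curves have this form. -/
noncomputable def phaseAverage (ν : Measure Y) (w : Y → ℂ) (Γ : Y → ℝ × ℝ) (ξ : ℝ × ℝ) : ℂ :=
  ∫ y, Complex.exp (Complex.I * (ξ.1 * (Γ y).1 + ξ.2 * (Γ y).2)) * w y ∂ν

lemma phaseAverage_mul [SFinite ν] [SFinite τ] (ξ : ℝ × ℝ) :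
    phaseAverage ν w Γ ξ * phaseAverage τ v Δ ξ =
      phaseAverage (ν.prod τ) (fun z => w z.1 * v z.2) (fun z => Γ z.1 + Δ z.2) ξ := by
  rw [phaseAverage, phaseAverage, phaseAverage, ← integral_prod_mul]
  refine integral_congr_ae (.of_forall fun z => ?_)
  simp only [Prod.fst_add, Prod.snd_add, Complex.ofReal_add]
  rw [mul_mul_mul_comm, ← Complex.exp_add]
  ring_nf

lemma op_phaseAverage [SFinite ν] (hw : Integrable w ν) (hΓ : Measurable Γ) (f : 𝓢(ℝ × ℝ, ℂ))
    (x : ℝ × ℝ) :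
    op (phaseAverage ν w Γ) f x = ∫ y, w y * f (x + (2 * Real.pi)⁻¹ • Γ y) ∂ν := by
  set e : ℝ × ℝ → Y → ℂ := fun ξ y =>
    Complex.exp (((2 * Real.pi * (x.1 * ξ.1 + x.2 * ξ.2) + (ξ.1 * (Γ y).1 + ξ.2 * (Γ y).2) : ℝ) : ℂ)
      * Complex.I) with he
  have hint : Integrable (fun z : (ℝ × ℝ) × Y => e z.1 z.2 * (ft f z.1 * w z.2))
      (volume.prod ν) := by
    refine ((integrable_ft f).mul_prod hw).bdd_mul (c := 1) ?_ (.of_forall fun z => ?_)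
    · exact (by fun_prop : Measurable fun z : (ℝ × ℝ) × Y => e z.1 z.2).aestronglyMeasurable
    · exact (Complex.norm_exp_ofReal_mul_I _).le
  calc op (phaseAverage ν w Γ) f x =
          ∫ ξ : ℝ × ℝ, ∫ y, e ξ y * (ft f ξ * w y) ∂ν := by
        refine integral_congr_ae (.of_forall fun ξ => ?_)
        beta_reduce
        rw [phaseAverage, ← integral_mul_const, ← integral_const_mul]
        refine integral_congr_ae (.of_forall fun y => ?_)
        have hexp : e ξ y = Complex.exp (2 * Real.pi * Complex.I * (x.1 * ξ.1 + x.2 * ξ.2)) *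
            Complex.exp (Complex.I * (ξ.1 * (Γ y).1 + ξ.2 * (Γ y).2)) := by
          rw [he, ← Complex.exp_add]
          push_cast
          ring_nf
        simp only [hexp]
        ring
    _ = ∫ y, (∫ ξ : ℝ × ℝ, e ξ y * (ft f ξ * w y)) ∂ν := integral_integral_swap hint
    _ = ∫ y, w y * ftInv (ft f) (x + (2 * Real.pi)⁻¹ • Γ y) ∂ν := by
        refine integral_congr_ae (.of_forall fun y => ?_)
        beta_reduce
        rw [ftInv, ← integral_const_mul]
        refine integral_congr_ae (.of_forall fun ξ => ?_)
        have hexp : e ξ y = Complex.exp (2 * Real.pi * Complex.I *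
            ((x + (2 * Real.pi)⁻¹ • Γ y).1 * ξ.1 + (x + (2 * Real.pi)⁻¹ • Γ y).2 * ξ.2)) := by
          have hpi : (Real.pi : ℂ) ≠ 0 := Complex.ofReal_ne_zero.2 Real.pi_ne_zero
          simp only [he, Prod.fst_add, Prod.snd_add, Prod.smul_fst, Prod.smul_snd, smul_eq_mul]
          push_cast
          field_simp
          ring_nf
        simp only [hexp]
        ring
    _ = _ := by rw [ftInv_ft]

lemma enorm_le_eLpNorm_top_of_continuous {E F : Type*} [TopologicalSpace E] [MeasurableSpace E]
    {μ : Measure E} [μ.IsOpenPosMeasure] [NormedAddCommGroup F] {f : E → F} (hf : Continuous f)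
    (x : E) : ‖f x‖ₑ ≤ eLpNorm f ∞ μ := by
  have hclosed : IsClosed {x | ‖f x‖ₑ ≤ eLpNorm f ∞ μ} := isClosed_le hf.enorm continuous_const
  have hdense : Dense {x | ‖f x‖ₑ ≤ eLpNorm f ∞ μ} := Measure.dense_of_ae ae_le_eLpNormEssSup
  exact eq_univ_iff_forall.1 (hclosed.closure_eq.symm.trans hdense.closure_eq) x

lemma eLpNorm_top_op_phaseAverage_le [SFinite ν] (hw : Integrable w ν) (hΓ : Measurable Γ)
    (f : 𝓢(ℝ × ℝ, ℂ)) :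
    eLpNorm (op (phaseAverage ν w Γ) f) ∞ volume ≤ (∫⁻ y, ‖w y‖ₑ ∂ν) * eLpNorm f ∞ volume := by
  refine eLpNormEssSup_le_of_ae_enorm_bound (.of_forall fun x => ?_)
  rw [op_phaseAverage hw hΓ, ← lintegral_mul_const' _ _ (f.memLp_top volume).eLpNorm_lt_top.ne]
  refine (enorm_integral_le_lintegral_enorm _).trans (lintegral_mono fun y => ?_)
  rw [enorm_mul]
  gcongr
  exact enorm_le_eLpNorm_top_of_continuous f.continuous _

lemma phaseAverage_fourierInv {φ : ℝ → ℂ} (hφ : Continuous φ) (hφi : Integrable φ)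
    (hφi' : Integrable (𝓕 φ)) (k ξ : ℝ × ℝ) :
    phaseAverage volume (𝓕⁻ φ) (fun r => (-2 * Real.pi * r) • k) ξ =
      φ (k.1 * ξ.1 + k.2 * ξ.2) := by
  have hinversion : φ = 𝓕 (𝓕⁻ φ) := (hφ.fourier_fourierInv_eq hφi hφi').symm
  conv_rhs => rw [hinversion]
  rw [Real.fourier_real_eq_integral_exp_smul, phaseAverage]
  refine integral_congr_ae (.of_forall fun r => ?_)
  simp only [Prod.smul_fst, Prod.smul_snd, smul_eq_mul]
  push_cast
  ring_nf

end PhaseAverage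

section CurveMultiplier

variable {g : ℝ → ℂ} {θ : ℝ → ℝ}

lemma contDiff_phaseAverage_graph (hg : Continuous g) (hgc : HasCompactSupport g)
    (hθ : Continuous θ) :
    ContDiff ℝ (⊤ : ℕ∞) (phaseAverage volume g fun t => (t, θ t)) := by
  -- `VectorFourier` uses the character `exp(-2πi L x ξ)`, so `L` is the dot product over `-2π`.
  let L : (ℝ × ℝ) →L[ℝ] (ℝ × ℝ) →L[ℝ] ℝ := (-(2 * Real.pi)⁻¹) •
    ((ContinuousLinearMap.mul ℝ ℝ).bilinearComp (.fst ℝ ℝ ℝ) (.fst ℝ ℝ ℝ) +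
      (ContinuousLinearMap.mul ℝ ℝ).bilinearComp (.snd ℝ ℝ ℝ) (.snd ℝ ℝ ℝ))
  have hL (x ξ : ℝ × ℝ) : L x ξ = -(2 * Real.pi)⁻¹ * (x.1 * ξ.1 + x.2 * ξ.2) := rfl
  have hgraph : Measurable fun t => (t, θ t) := (continuous_id.prodMk hθ).measurable
  have hsmooth : ContDiff ℝ (⊤ : ℕ∞) (VectorFourier.fourierIntegral Real.fourierChar
      ((volume : Measure ℝ).map fun t => (t, θ t)) L.toLinearMap₁₂ fun x : ℝ × ℝ => g x.1) := by
    refine VectorFourier.contDiff_fourierIntegral L fun n _ => ?_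
    rw [integrable_map_measure (by fun_prop) hgraph.aemeasurable]
    refine Continuous.integrable_of_hasCompactSupport ?_ hgc.norm.mul_left
    simp only [Function.comp_def]
    fun_prop
  convert hsmooth using 1
  ext ξ
  have hchar (x : ℝ × ℝ) : (Real.fourierChar (-L.toLinearMap₁₂ x ξ)) • g x.1 =
      Complex.exp (Complex.I * (ξ.1 * x.1 + ξ.2 * x.2)) * g x.1 := by
    have hpi : (Real.pi : ℂ) ≠ 0 := Complex.ofReal_ne_zero.2 Real.pi_ne_zero
    rw [ContinuousLinearMap.toLinearMap₁₂_apply_apply_apply, hL, Circle.smul_def,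
      Real.fourierChar_apply, smul_eq_mul]
    push_cast
    field_simp
  simp only [VectorFourier.fourierIntegral, hchar, phaseAverage]
  rw [integral_map hgraph.aemeasurable (by fun_prop)]

end CurveMultiplier

section VanDerCorput

variable {ψ : ℝ → ℝ} {a b t μ : ℝ}

lemma hasDerivAt_deriv_of_two (hψ : ContDiffAt ℝ 2 ψ t) :
    HasDerivAt (deriv ψ) (iteratedDeriv 2 ψ t) t := by
  rw [iteratedDeriv_succ, iteratedDeriv_one]
  exact ((hψ.derivWithin one_add_one_eq_two.le).differentiableAt one_ne_zero).hasDerivAt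

lemma continuousAt_iteratedDeriv_two (hψ : ContDiffAt ℝ 2 ψ t) :
    ContinuousAt (iteratedDeriv 2 ψ) t := by
  rw [iteratedDeriv_succ, iteratedDeriv_one]
  exact ((hψ.derivWithin one_add_one_eq_two.le).derivWithin (zero_add 1).le).continuousAt

lemma abs_div_sq_add_sq_le (x : ℝ) (hμ : 0 < μ) : |x / (x ^ 2 + μ ^ 2)| ≤ 1 / (2 * μ) := by
  have hden : 0 < x ^ 2 + μ ^ 2 := by positivity
  rw [abs_div, abs_of_pos hden, div_le_div_iff₀ hden (by positivity)]
  nlinarith [sq_nonneg (|x| - μ), sq_abs x]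

/-- The approximate antiderivative of `exp(iψ)` in van der Corput's second derivative test. Away
from the stationary points of `ψ` it is close to `exp(iψ) / (iψ')`; the term `μ ^ 2` removes the
singularity at the stationary points. -/
noncomputable def corrector (ψ : ℝ → ℝ) (μ t : ℝ) : ℂ :=
  -Complex.I * (deriv ψ t / (deriv ψ t ^ 2 + μ ^ 2) : ℝ) * Complex.exp (Complex.I * ψ t)

lemma norm_corrector_le (hμ : 0 < μ) : ‖corrector ψ μ t‖ ≤ 1 / (2 * μ) := by
  rw [corrector, norm_mul, norm_mul, norm_neg, Complex.norm_I, one_mul,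
    Complex.norm_exp_I_mul_ofReal, mul_one, Complex.norm_real]
  exact abs_div_sq_add_sq_le _ hμ

lemma hasDerivAt_corrector (hψ : ContDiffAt ℝ 2 ψ t) (hμ : 0 < μ) :
    HasDerivAt (corrector ψ μ)
      (Complex.exp (Complex.I * ψ t) * (1 - ((μ ^ 2 / (deriv ψ t ^ 2 + μ ^ 2) : ℝ) + Complex.I *
        (iteratedDeriv 2 ψ t * (μ ^ 2 - deriv ψ t ^ 2) / (deriv ψ t ^ 2 + μ ^ 2) ^ 2 : ℝ)))) t := by
  have hden : deriv ψ t ^ 2 + μ ^ 2 ≠ 0 := by positivity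
  have hψ' := hasDerivAt_deriv_of_two hψ
  have hphase : HasDerivAt (fun s => Complex.exp (Complex.I * ψ s))
      (Complex.exp (Complex.I * ψ t) * (Complex.I * deriv ψ t)) t :=
    ((hψ.differentiableAt two_ne_zero).hasDerivAt.ofReal_comp.const_mul Complex.I).cexp
  refine (((hψ'.fun_div ((hψ'.fun_pow 2).add_const _) hden).ofReal_comp.const_mul
    (-Complex.I)).mul hphase).congr_deriv ?_
  have hden' : ((deriv ψ t : ℝ) : ℂ) ^ 2 + (μ : ℂ) ^ 2 ≠ 0 := mod_cast hden
  push_cast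
  field_simp
  ring_nf
  simp only [Complex.I_sq]
  ring

lemma contDiffAt_corrector (hψ : ContDiffAt ℝ 2 ψ t) (hμ : 0 < μ) :
    ContDiffAt ℝ 1 (corrector ψ μ) t := by
  have hψ' : ContDiffAt ℝ 1 (deriv ψ) t := hψ.derivWithin one_add_one_eq_two.le
  have hψ1 : ContDiffAt ℝ 1 ψ t := hψ.of_le one_le_two
  have hquot : ContDiffAt ℝ 1 (fun s => deriv ψ s / (deriv ψ s ^ 2 + μ ^ 2)) t :=
    hψ'.div ((hψ'.pow 2).add contDiffAt_const) (by positivity)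
  exact (contDiffAt_const.mul (Complex.ofRealCLM.contDiff.contDiffAt.comp t hquot)).mul
    (contDiffAt_const.mul (Complex.ofRealCLM.contDiff.contDiffAt.comp t hψ1)).cexp

lemma norm_exp_sub_deriv_corrector_le (hψ : ContDiffAt ℝ 2 ψ t) (hμ : 0 < μ)
    (hψ2 : μ ^ 2 ≤ iteratedDeriv 2 ψ t) :
    ‖Complex.exp (Complex.I * ψ t) - deriv (corrector ψ μ) t‖ ≤
      2 * (iteratedDeriv 2 ψ t / (deriv ψ t ^ 2 + μ ^ 2)) := by
  have hden : 0 < deriv ψ t ^ 2 + μ ^ 2 := by positivity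
  have hψ0 : 0 ≤ iteratedDeriv 2 ψ t := (sq_nonneg μ).trans hψ2
  have hfst : |μ ^ 2 / (deriv ψ t ^ 2 + μ ^ 2)| ≤
      iteratedDeriv 2 ψ t / (deriv ψ t ^ 2 + μ ^ 2) := by
    rw [abs_of_nonneg (by positivity)]
    gcongr
  have hsnd : |iteratedDeriv 2 ψ t * (μ ^ 2 - deriv ψ t ^ 2) / (deriv ψ t ^ 2 + μ ^ 2) ^ 2| ≤
      iteratedDeriv 2 ψ t / (deriv ψ t ^ 2 + μ ^ 2) := by
    have hnum : |μ ^ 2 - deriv ψ t ^ 2| ≤ deriv ψ t ^ 2 + μ ^ 2 :=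
      abs_le.2 ⟨by linarith [sq_nonneg μ], by linarith [sq_nonneg (deriv ψ t)]⟩
    rw [abs_div, abs_mul, abs_of_nonneg hψ0, abs_of_pos (pow_pos hden 2),
      div_le_div_iff₀ (pow_pos hden 2) hden]
    nlinarith [mul_le_mul_of_nonneg_left hnum (mul_nonneg hψ0 hden.le)]
  rw [(hasDerivAt_corrector hψ hμ).deriv, mul_one_sub, sub_sub_self, norm_mul,
    Complex.norm_exp_I_mul_ofReal, one_mul]
  refine (norm_add_le _ _).trans ?_
  rw [norm_mul, Complex.norm_I, one_mul, Complex.norm_real, Complex.norm_real, two_mul]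
  exact add_le_add hfst hsnd

lemma hasDerivAt_arctan_deriv_div (hψ : ContDiffAt ℝ 2 ψ t) (hμ : 0 < μ) :
    HasDerivAt (fun s => 2 / μ * Real.arctan (deriv ψ s / μ))
      (2 * (iteratedDeriv 2 ψ t / (deriv ψ t ^ 2 + μ ^ 2))) t := by
  have hden : deriv ψ t ^ 2 + μ ^ 2 ≠ 0 := by positivity
  refine (((hasDerivAt_deriv_of_two hψ).div_const μ).arctan.const_mul (2 / μ)).congr_deriv ?_
  field_simp
  ring

lemma norm_integral_exp_sub_deriv_corrector_le (hab : a ≤ b) (hμ : 0 < μ)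
    (hψ : ∀ t ∈ Icc a b, ContDiffAt ℝ 2 ψ t)
    (hψ2 : ∀ t ∈ Icc a b, μ ^ 2 ≤ iteratedDeriv 2 ψ t) :
    ‖∫ t in a..b, (Complex.exp (Complex.I * ψ t) - deriv (corrector ψ μ) t)‖ ≤
      2 * Real.pi / μ := by
  have hψ_uIcc (t) (ht : t ∈ uIcc a b) : ContDiffAt ℝ 2 ψ t := hψ t (uIcc_of_le hab ▸ ht)
  have hint : IntervalIntegrable
      (fun t => 2 * (iteratedDeriv 2 ψ t / (deriv ψ t ^ 2 + μ ^ 2))) volume a b :=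
    ContinuousOn.intervalIntegrable fun t ht =>
      ((continuousAt_const.mul ((continuousAt_iteratedDeriv_two (hψ_uIcc t ht)).div
        (((hasDerivAt_deriv_of_two (hψ_uIcc t ht)).continuousAt.pow 2).add continuousAt_const)
        (add_pos_of_nonneg_of_pos (sq_nonneg _) (pow_pos hμ 2)).ne')).continuousWithinAt)
  calc _ ≤ ∫ t in a..b, 2 * (iteratedDeriv 2 ψ t / (deriv ψ t ^ 2 + μ ^ 2)) :=
        intervalIntegral.norm_integral_le_of_norm_le hab (.of_forall fun t ht =>
          norm_exp_sub_deriv_corrector_le (hψ t (Ioc_subset_Icc_self ht)) hμ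
            (hψ2 t (Ioc_subset_Icc_self ht))) hint
    _ = 2 / μ * (Real.arctan (deriv ψ b / μ) - Real.arctan (deriv ψ a / μ)) := by
        rw [intervalIntegral.integral_eq_sub_of_hasDerivAt (fun t ht =>
          hasDerivAt_arctan_deriv_div (hψ_uIcc t ht) hμ) hint, mul_sub]
    _ ≤ 2 / μ * Real.pi := by
        gcongr
        linarith [Real.arctan_lt_pi_div_two (deriv ψ b / μ),
          Real.neg_pi_div_two_lt_arctan (deriv ψ a / μ)]
    _ = _ := by ring

lemma norm_integral_exp_le_of_sq_le_iteratedDeriv_two (hab : a ≤ b) (hμ : 0 < μ)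
    (hψ : ∀ t ∈ Icc a b, ContDiffAt ℝ 2 ψ t)
    (hψ2 : ∀ t ∈ Icc a b, μ ^ 2 ≤ iteratedDeriv 2 ψ t) :
    ‖∫ t in a..b, Complex.exp (Complex.I * ψ t)‖ ≤ (1 + 2 * Real.pi) / μ := by
  have hψ_uIcc (t) (ht : t ∈ uIcc a b) : ContDiffAt ℝ 2 ψ t := hψ t (uIcc_of_le hab ▸ ht)
  have hexp : IntervalIntegrable (fun t => Complex.exp (Complex.I * ψ t)) volume a b :=
    ContinuousOn.intervalIntegrable fun t ht =>
      ((Complex.continuous_ofReal.continuousAt.comp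
        (hψ_uIcc t ht).continuousAt).const_mul Complex.I).cexp.continuousWithinAt
  have hcorrector : IntervalIntegrable (deriv (corrector ψ μ)) volume a b :=
    ContinuousOn.intervalIntegrable fun t ht => ((contDiffAt_corrector (hψ_uIcc t ht)
      hμ).derivWithin (zero_add 1).le).continuousAt.continuousWithinAt
  have hftc := intervalIntegral.integral_deriv_eq_sub
    (fun t ht => (contDiffAt_corrector (hψ_uIcc t ht) hμ).differentiableAt one_ne_zero) hcorrector
  have herror := norm_integral_exp_sub_deriv_corrector_le hab hμ hψ hψ2
  rw [intervalIntegral.integral_sub hexp hcorrector, hftc] at herror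
  calc ‖∫ t in a..b, Complex.exp (Complex.I * ψ t)‖
      ≤ ‖(∫ t in a..b, Complex.exp (Complex.I * ψ t)) - (corrector ψ μ b - corrector ψ μ a)‖ +
          ‖corrector ψ μ b - corrector ψ μ a‖ := norm_le_norm_sub_add _ _
    _ ≤ 2 * Real.pi / μ + (1 / (2 * μ) + 1 / (2 * μ)) := by
        gcongr
        exact (norm_sub_le _ _).trans (add_le_add (norm_corrector_le hμ) (norm_corrector_le hμ))
    _ = (1 + 2 * Real.pi) / μ := by
        field_simp
        ring

lemma norm_integral_exp_le_of_le_abs_iteratedDeriv_two (hab : a ≤ b) {lam : ℝ} (hlam : 0 < lam)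
    (hψ : ∀ t ∈ Icc a b, ContDiffAt ℝ 2 ψ t)
    (hψ2 : ∀ t ∈ Icc a b, lam ≤ |iteratedDeriv 2 ψ t|) :
    ‖∫ t in a..b, Complex.exp (Complex.I * ψ t)‖ ≤ (1 + 2 * Real.pi) / √lam := by
  have hcont : ContinuousOn (iteratedDeriv 2 ψ) (Icc a b) := fun t ht =>
    (continuousAt_iteratedDeriv_two (hψ t ht)).continuousWithinAt
  have hlam2 : √lam ^ 2 = lam := Real.sq_sqrt hlam.le
  rcases isPreconnected_Icc.eq_or_eq_neg_of_sq_eq hcont hcont.abs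
    (fun t _ => (sq_abs (iteratedDeriv 2 ψ t)).symm)
    (fun ht => (hlam.trans_le (hψ2 _ ht)).ne') with hsign | hsign
  · refine norm_integral_exp_le_of_sq_le_iteratedDeriv_two hab (Real.sqrt_pos.2 hlam) hψ
      fun t ht => ?_
    rw [hlam2, hsign ht]
    exact hψ2 t ht
  · have hneg := norm_integral_exp_le_of_sq_le_iteratedDeriv_two (ψ := -ψ) hab
      (Real.sqrt_pos.2 hlam) (fun t ht => (hψ t ht).neg) fun t ht => by
        rw [hlam2, iteratedDeriv_neg, hsign ht, Pi.neg_apply, neg_neg]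
        exact hψ2 t ht
    rw [← RCLike.norm_conj, ← intervalIntegral.intervalIntegral_conj]
    simpa only [← Complex.exp_conj, map_mul, Complex.conj_I, Complex.conj_ofReal, Pi.neg_apply,
      Complex.ofReal_neg, mul_neg, neg_mul] using hneg

lemma norm_integral_mul_le_of_norm_primitive_le (hab : a ≤ b) {e g : ℝ → ℂ} {M : ℝ}
    (he : ContinuousOn e (Icc a b)) (hM : ∀ t ∈ Icc a b, ‖∫ s in a..t, e s‖ ≤ M)
    (hg : ∀ t ∈ Icc a b, DifferentiableAt ℝ g t) (hg' : IntervalIntegrable (deriv g) volume a b) :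
    ‖∫ t in a..b, e t * g t‖ ≤ M * (‖g b‖ + ∫ t in a..b, ‖deriv g t‖) := by
  set E : ℝ → ℂ := fun t => ∫ s in a..t, e s
  have heint : IntervalIntegrable e volume a b := ContinuousOn.intervalIntegrable_of_Icc hab he
  have hEcont : ContinuousOn E (uIcc a b) :=
    intervalIntegral.continuousOn_primitive_interval' heint left_mem_uIcc
  have hEderiv (t) (ht : t ∈ Ioo (min a b) (max a b)) : HasDerivAt E (e t) t := by
    rw [min_eq_left hab, max_eq_right hab] at ht
    exact intervalIntegral.integral_hasDerivAt_right
      (heint.mono_set (uIcc_subset_uIcc_left (Icc_subset_uIcc (Ioo_subset_Icc_self ht))))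
      ((he.mono Ioo_subset_Icc_self).stronglyMeasurableAtFilter isOpen_Ioo t ht)
      (he.continuousAt (Icc_mem_nhds ht.1 ht.2))
  have hparts : ∫ t in a..b, g t * e t = g b * E b - g a * E a - ∫ t in a..b, deriv g t * E t :=
    intervalIntegral.integral_mul_deriv_eq_deriv_mul_of_hasDerivAt
      (fun t ht => (hg t (uIcc_of_le hab ▸ ht)).continuousAt.continuousWithinAt) hEcont
      (fun t ht => (hg t ⟨by simpa [hab] using ht.1.le, by simpa [hab] using ht.2.le⟩).hasDerivAt)
      hEderiv hg' heint
  have hEa : E a = 0 := intervalIntegral.integral_same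
  calc ‖∫ t in a..b, e t * g t‖ = ‖g b * E b - ∫ t in a..b, deriv g t * E t‖ := by
        simp_rw [mul_comm (e _), hparts, hEa, mul_zero, sub_zero]
    _ ≤ ‖g b * E b‖ + ‖∫ t in a..b, deriv g t * E t‖ := norm_sub_le _ _
    _ ≤ ‖g b‖ * M + ∫ t in a..b, ‖deriv g t‖ * M := by
        gcongr
        · exact (norm_mul _ _).trans_le (by gcongr; exact hM b ⟨hab, le_rfl⟩)
        · refine intervalIntegral.norm_integral_le_of_norm_le hab (.of_forall fun t ht => ?_)
            (hg'.norm.mul_const M)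
          rw [norm_mul]
          gcongr
          exact hM t (Ioc_subset_Icc_self ht)
    _ = M * (‖g b‖ + ∫ t in a..b, ‖deriv g t‖) := by
        rw [intervalIntegral.integral_mul_const]
        ring

lemma norm_integral_exp_mul_le_of_le_abs_iteratedDeriv_two (hab : a ≤ b) {lam : ℝ} (hlam : 0 < lam)
    (hψ : ∀ t ∈ Icc a b, ContDiffAt ℝ 2 ψ t)
    (hψ2 : ∀ t ∈ Icc a b, lam ≤ |iteratedDeriv 2 ψ t|) {g : ℝ → ℂ}
    (hg : ∀ t ∈ Icc a b, DifferentiableAt ℝ g t) (hg' : IntervalIntegrable (deriv g) volume a b) :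
    ‖∫ t in a..b, Complex.exp (Complex.I * ψ t) * g t‖ ≤
      (1 + 2 * Real.pi) / √lam * (‖g b‖ + ∫ t in a..b, ‖deriv g t‖) := by
  refine norm_integral_mul_le_of_norm_primitive_le hab (fun t ht => ?_) (fun t ht => ?_) hg hg'
  · exact ((Complex.continuous_ofReal.continuousAt.comp
      (hψ t ht).continuousAt).const_mul Complex.I).cexp.continuousWithinAt
  · exact norm_integral_exp_le_of_le_abs_iteratedDeriv_two ht.1 hlam
      (fun s hs => hψ s ⟨hs.1, hs.2.trans ht.2⟩) fun s hs => hψ2 s ⟨hs.1, hs.2.trans ht.2⟩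

end VanDerCorput

section CurveDecay

open scoped Topology

variable {g : ℝ → ℂ} {θ : ℝ → ℝ} {a b c : ℝ}

/-- Quantitative nondegeneracy of the plane curve `t ↦ (t, θ t)` over `a ≤ |t| ≤ b`. Curvature is
only required for positive `t`; the parity of `θ` transfers it to negative `t`. -/
structure IsCurvedGraph (θ : ℝ → ℝ) (a b c : ℝ) : Prop where
  continuous : Continuous θ
  even_or_odd : θ.Even ∨ θ.Odd
  contDiffAt (t : ℝ) (ht : t ∈ Icc a b) : ContDiffAt ℝ 2 θ t
  le_abs_iteratedDeriv_two (t : ℝ) (ht : t ∈ Icc a b) : c ≤ |iteratedDeriv 2 θ t|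

lemma iteratedDeriv_two_linear_add_const_mul {t : ℝ} (hθ : ContDiffAt ℝ 2 θ t) (α β : ℝ) :
    iteratedDeriv 2 (fun s => α * s + β * θ s) t = β * iteratedDeriv 2 θ t := by
  have hid : iteratedDeriv 2 (fun s : ℝ => α * s) t = 0 := by
    simp [iteratedDeriv_succ]
  rw [iteratedDeriv_fun_add (contDiffAt_const.mul contDiffAt_id)
    (contDiffAt_const.mul (mod_cast hθ)), hid, zero_add, iteratedDeriv_const_mul_field]

lemma hasCompactSupport_of_support_subset_annulus {E : Type*} [Zero E] {h : ℝ → E}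
    (hsupp : Function.support h ⊆ {t | a ≤ |t| ∧ |t| ≤ b}) : HasCompactSupport h :=
  HasCompactSupport.of_support_subset_isCompact (isCompact_closedBall (0 : ℝ) b)
    fun t ht => by simpa using (hsupp ht).2

lemma integral_eq_integral_Ioi_add_integral_Ioi_comp_neg {E : Type*} [NormedAddCommGroup E]
    [NormedSpace ℝ E] {f : ℝ → E} (hf : Integrable f) :
    ∫ t, f t = (∫ t in Ioi (0 : ℝ), f t) + ∫ t in Ioi (0 : ℝ), f (-t) := by
  rw [integral_comp_neg_Ioi, neg_zero, add_comm,
    intervalIntegral.integral_Iic_add_Ioi hf.integrableOn hf.integrableOn]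

lemma norm_setIntegral_Ioi_exp_mul_le (hg : ContDiff ℝ 1 g) (ha : 0 < a) (hab : a ≤ b)
    (hsupp : Function.support g ⊆ {t | a ≤ |t| ∧ |t| ≤ b}) (hc : 0 < c)
    (hθ : ∀ t ∈ Icc a b, ContDiffAt ℝ 2 θ t) (hθ2 : ∀ t ∈ Icc a b, c ≤ |iteratedDeriv 2 θ t|)
    (α : ℝ) {β : ℝ} (hβ : β ≠ 0) :
    ‖∫ t in Ioi (0 : ℝ), Complex.exp (Complex.I * (α * t + β * θ t : ℝ)) * g t‖ ≤
      (1 + 2 * Real.pi) / √(c * |β|) * ∫ t in Ioi (0 : ℝ), ‖deriv g t‖ := by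
  have hpos : Icc a b ⊆ Ioi 0 := fun t ht => ha.trans_le ht.1
  have hg0 (t) (ht : t ∈ Ioi 0 \ Icc a b) : g t = 0 := by
    by_contra hne
    obtain ⟨hat, htb⟩ := hsupp hne
    rw [abs_of_pos ht.1] at hat htb
    exact ht.2 ⟨hat, htb⟩
  have hgb : g b = 0 := by
    refine tendsto_nhds_unique (hg.continuous.continuousWithinAt (s := Ioi b)) ?_
    refine tendsto_const_nhds.congr' (eventually_mem_nhdsWithin.mono fun t (ht : b < t) => ?_)
    exact (hg0 t ⟨ha.trans_le (hab.trans ht.le), fun h => ht.not_ge h.2⟩).symm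
  have hderiv_int : Integrable (deriv g) :=
    (hg.continuous_deriv le_rfl).integrable_of_hasCompactSupport
      (hasCompactSupport_of_support_subset_annulus hsupp).deriv
  have hrestrict : ∫ t in Ioi (0 : ℝ), Complex.exp (Complex.I * (α * t + β * θ t : ℝ)) * g t =
      ∫ t in a..b, Complex.exp (Complex.I * (α * t + β * θ t : ℝ)) * g t := by
    rw [intervalIntegral.integral_of_le hab, ← integral_Icc_eq_integral_Ioc]
    refine (setIntegral_eq_of_subset_of_forall_sdiff_eq_zero measurableSet_Ioi hpos
      fun t ht => ?_)
    rw [hg0 t ht, mul_zero]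
  have hvdc := norm_integral_exp_mul_le_of_le_abs_iteratedDeriv_two hab
    (ψ := fun t => α * t + β * θ t) (mul_pos hc (abs_pos.2 hβ))
    (fun t ht => (contDiffAt_const.mul contDiffAt_id).add (contDiffAt_const.mul (hθ t ht)))
    (fun t ht => by
      rw [iteratedDeriv_two_linear_add_const_mul (hθ t ht), abs_mul, mul_comm]
      gcongr
      exact hθ2 t ht)
    (fun t _ => hg.differentiable one_ne_zero t)
    ((hg.continuous_deriv le_rfl).intervalIntegrable a b)
  rw [hgb, norm_zero, zero_add, ← hrestrict] at hvdc
  refine hvdc.trans ?_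
  gcongr
  rw [intervalIntegral.integral_of_le hab]
  exact setIntegral_mono_set hderiv_int.norm.integrableOn (.of_forall fun _ => norm_nonneg _)
    (Ioc_subset_Icc_self.trans hpos).eventuallyLE

lemma norm_phaseAverage_graph_le (hg : ContDiff ℝ 1 g) (ha : 0 < a) (hab : a ≤ b)
    (hsupp : Function.support g ⊆ {t | a ≤ |t| ∧ |t| ≤ b}) (hc : 0 < c)
    (hθ : IsCurvedGraph θ a b c) {ξ : ℝ × ℝ} (hξ : ξ.2 ≠ 0) :
    ‖phaseAverage volume g (fun t => (t, θ t)) ξ‖ ≤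
      (1 + 2 * Real.pi) / √(c * |ξ.2|) * ∫ t, ‖deriv g t‖ := by
  obtain ⟨hθc, hparity, hθ, hθ2⟩ := hθ
  have hgc := hasCompactSupport_of_support_subset_annulus hsupp
  have hint : Integrable fun t => Complex.exp (Complex.I * (ξ.1 * t + ξ.2 * θ t : ℝ)) * g t := by
    refine (hg.continuous.integrable_of_hasCompactSupport hgc).bdd_mul (c := 1)
      (by fun_prop) (.of_forall fun t => ?_)
    rw [mul_comm, Complex.norm_exp_ofReal_mul_I]
  have hderiv_int : Integrable fun t => ‖deriv g t‖ :=
    ((hg.continuous_deriv le_rfl).integrable_of_hasCompactSupport hgc.deriv).norm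
  have hsupp_neg : Function.support (fun t => g (-t)) ⊆ {t | a ≤ |t| ∧ |t| ≤ b} :=
    fun t ht => by simpa using hsupp ht
  obtain ⟨β, hβ, hθ_neg⟩ : ∃ β, |β| = |ξ.2| ∧ ∀ t, ξ.2 * θ (-t) = β * θ t := by
    rcases hparity with heven | hodd
    · exact ⟨ξ.2, rfl, fun t => by rw [heven]⟩
    · exact ⟨-ξ.2, abs_neg _, fun t => by rw [hodd, mul_neg, neg_mul]⟩
  have hβ0 : β ≠ 0 := abs_ne_zero.1 (hβ ▸ abs_ne_zero.2 hξ)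
  have hright := norm_setIntegral_Ioi_exp_mul_le hg ha hab hsupp hc hθ hθ2 ξ.1 hξ
  have hleft := norm_setIntegral_Ioi_exp_mul_le (hg.comp contDiff_neg) ha hab hsupp_neg hc hθ hθ2
    (-ξ.1) hβ0
  rw [hβ] at hleft
  have hphase : phaseAverage volume g (fun t => (t, θ t)) ξ =
      ∫ t, Complex.exp (Complex.I * (ξ.1 * t + ξ.2 * θ t : ℝ)) * g t := by
    simp only [phaseAverage, Complex.ofReal_add, Complex.ofReal_mul]
  rw [hphase, integral_eq_integral_Ioi_add_integral_Ioi_comp_neg hint,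
    integral_eq_integral_Ioi_add_integral_Ioi_comp_neg hderiv_int, mul_add]
  refine norm_add_le_of_le hright ?_
  simpa only [Function.comp_def, deriv_comp_neg, norm_neg, hθ_neg, mul_neg, neg_mul] using hleft

end CurveDecay

section RescaledCurve

variable {γ : ℝ → ℝ} {r c C : ℝ}

lemma abs_log_sub_log_le_of_abs_mul_deriv_div_le (hγ : DifferentiableOn ℝ γ (Ioo 0 r))
    (hpos : ∀ t ∈ Ioo 0 r, 0 < γ t) (hlog : ∀ t ∈ Ioo 0 r, |t * deriv γ t / γ t| ≤ C)
    {s t : ℝ} (hs : s ∈ Ioo 0 r) (ht : t ∈ Ioo 0 r) :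
    |Real.log (γ s) - Real.log (γ t)| ≤ C * |Real.log s - Real.log t| := by
  have hexp {x : ℝ} (hx : x ∈ Iio (Real.log r)) : Real.exp x ∈ Ioo 0 r :=
    ⟨Real.exp_pos x, (Real.lt_log_iff_exp_lt (hs.1.trans hs.2)).1 hx⟩
  have hderiv (x) (hx : x ∈ Iio (Real.log r)) :
      HasDerivWithinAt (fun x => Real.log (γ (Real.exp x)))
        (deriv γ (Real.exp x) * Real.exp x / γ (Real.exp x)) (Iio (Real.log r)) x :=
    ((((hγ.differentiableAt (isOpen_Ioo.mem_nhds (hexp hx))).hasDerivAt).comp x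
      (Real.hasDerivAt_exp x)).log (hpos _ (hexp hx)).ne').hasDerivWithinAt
  have hmvt := (convex_Iio (Real.log r)).norm_image_sub_le_of_norm_hasDerivWithin_le hderiv
    (fun x hx => by rw [mul_comm (deriv γ _)]; exact hlog _ (hexp hx))
    (Real.log_lt_log ht.1 ht.2) (Real.log_lt_log hs.1 hs.2)
  simpa only [Real.exp_log hs.1, Real.exp_log ht.1, Real.norm_eq_abs] using hmvt

lemma le_two_rpow_mul_of_abs_mul_deriv_div_le (hγ : DifferentiableOn ℝ γ (Ioo 0 r))
    (hpos : ∀ t ∈ Ioo 0 r, 0 < γ t) (hlog : ∀ t ∈ Ioo 0 r, |t * deriv γ t / γ t| ≤ C)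
    {s t : ℝ} (ht : t ∈ Icc (1 / 2) 2) (hs : s ∈ Ioo 0 r) (hst : s * t ∈ Ioo 0 r) :
    γ s ≤ 2 ^ C * γ (s * t) := by
  have ht0 : 0 < t := by linarith [ht.1]
  have hC : 0 ≤ C := (abs_nonneg _).trans (hlog s hs)
  have hlogt : |Real.log t| ≤ Real.log 2 := by
    refine abs_le.2 ⟨?_, Real.log_le_log ht0 ht.2⟩
    rw [← Real.log_inv, ← one_div]
    exact Real.log_le_log (by norm_num) ht.1
  have hmvt := abs_log_sub_log_le_of_abs_mul_deriv_div_le hγ hpos hlog hs hst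
  rw [Real.log_mul hs.1.ne' ht0.ne', sub_add_cancel_left, abs_neg] at hmvt
  have hle : Real.log (γ s) ≤ C * Real.log 2 + Real.log (γ (s * t)) := by
    linarith [le_abs_self (Real.log (γ s) - Real.log (γ (s * t))),
      mul_le_mul_of_nonneg_left hlogt hC]
  rw [← Real.log_rpow two_pos, ← Real.log_mul (by positivity) (hpos _ hst).ne'] at hle
  exact (Real.log_le_log_iff (hpos s hs) (mul_pos (by positivity) (hpos _ hst))).1 hle

lemma continuous_of_even_or_odd (hparity : γ.Even ∨ γ.Odd) (hcont : ContinuousOn γ (Ici 0)) :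
    Continuous γ := by
  have hneg : ContinuousOn (fun t => γ (-t)) (Iic 0) :=
    hcont.comp continuousOn_neg fun t (ht : t ≤ 0) => neg_nonneg.2 ht
  have hleft : ContinuousOn γ (Iic 0) := by
    rcases hparity with heven | hodd
    · simpa only [heven _] using hneg
    · simpa only [hodd _, Pi.neg_def, neg_neg] using hneg.neg
  rw [← continuousOn_univ, ← Iic_union_Ici (a := (0 : ℝ))]
  exact hleft.union_of_isClosed hcont isClosed_Iic isClosed_Ici

lemma continuous_gammaZ (hγ : Continuous γ) (l : ℤ) : Continuous (gammaZ γ l) :=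
  (hγ.comp (continuous_const_mul _)).div_const _

lemma gammaZ_even_or_odd (hparity : γ.Even ∨ γ.Odd) (l : ℤ) :
    (gammaZ γ l).Even ∨ (gammaZ γ l).Odd := by
  refine hparity.imp (fun heven t => ?_) fun hodd t => ?_
  · rw [gammaZ, gammaZ, mul_neg, heven]
  · rw [gammaZ, gammaZ, mul_neg, hodd, neg_div]

lemma iteratedDeriv_two_gammaZ (γ : ℝ → ℝ) (l : ℤ) (t : ℝ) :
    iteratedDeriv 2 (gammaZ γ l) t =
      ((2 : ℝ) ^ (-l)) ^ 2 * iteratedDeriv 2 γ ((2 : ℝ) ^ (-l) * t) / γ ((2 : ℝ) ^ (-l)) := by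
  have hderiv : deriv (gammaZ γ l) =
      fun t => (2 : ℝ) ^ (-l) * deriv γ ((2 : ℝ) ^ (-l) * t) / γ ((2 : ℝ) ^ (-l)) := by
    funext t
    have hcomp := deriv_comp_mul_left ((2 : ℝ) ^ (-l)) γ t
    rw [smul_eq_mul] at hcomp
    rw [← hcomp, ← deriv_div_const]
    rfl
  rw [iteratedDeriv_succ, iteratedDeriv_one, hderiv, deriv_div_const, deriv_const_mul_field,
    deriv_comp_mul_left, smul_eq_mul, iteratedDeriv_succ, iteratedDeriv_one]
  ring

lemma two_zpow_neg_mem_Ioo {l : ℤ} (hl : 2 ≤ l) : (2 : ℝ) ^ (-l) ∈ Ioo (0 : ℝ) 1 :=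
  ⟨by positivity, zpow_lt_one_of_neg₀ one_lt_two (by lia)⟩

lemma two_zpow_neg_mul_mem_Ioo {l : ℤ} (hl : 2 ≤ l) {t : ℝ} (ht : t ∈ Icc (1 / 2) 2) :
    (2 : ℝ) ^ (-l) * t ∈ Ioo (0 : ℝ) 1 := by
  have ht0 : 0 < t := by linarith [ht.1]
  have hquarter : (2 : ℝ) ^ (-l) ≤ 1 / 4 :=
    (zpow_le_zpow_right₀ one_le_two (neg_le_neg hl)).trans (by norm_num)
  refine ⟨by positivity, ?_⟩
  calc (2 : ℝ) ^ (-l) * t ≤ 1 / 4 * 2 := by gcongr; exact ht.2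
    _ < 1 := by norm_num

lemma contDiffAt_gammaZ {n : WithTop ℕ∞} (hγ : ContDiffOn ℝ n γ (Ioo 0 1)) {l : ℤ} (hl : 2 ≤ l)
    {t : ℝ} (ht : t ∈ Icc (1 / 2) 2) : ContDiffAt ℝ n (gammaZ γ l) t :=
  ((hγ.contDiffAt (isOpen_Ioo.mem_nhds (two_zpow_neg_mul_mem_Ioo hl ht))).comp t
    (contDiffAt_const.mul contDiffAt_id)).div_const _

lemma le_abs_iteratedDeriv_two_gammaZ (hγ : DifferentiableOn ℝ γ (Ioo 0 1))
    (hpos : ∀ t ∈ Ioo 0 1, 0 < γ t) (hlog : ∀ t ∈ Ioo 0 1, |t * deriv γ t / γ t| ≤ C)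
    (hc : 0 ≤ c) (hcurv : ∀ t ∈ Ioo 0 1, c ≤ |t ^ 2 * iteratedDeriv 2 γ t / γ t|)
    {l : ℤ} (hl : 2 ≤ l) {t : ℝ} (ht : t ∈ Icc (1 / 2) 2) :
    c / (4 * 2 ^ C) ≤ |iteratedDeriv 2 (gammaZ γ l) t| := by
  have hδt := two_zpow_neg_mul_mem_Ioo hl ht
  have hδ := two_zpow_neg_mem_Ioo hl
  have hdoubling := le_two_rpow_mul_of_abs_mul_deriv_div_le hγ hpos hlog ht hδ hδt
  have hcurv := hcurv _ hδt
  rw [iteratedDeriv_two_gammaZ]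
  generalize (2 : ℝ) ^ (-l) = δ at *
  have ht0 : 0 < t := by linarith [ht.1]
  have ht2 : t ^ 2 ≤ 4 := by nlinarith [ht.2]
  rw [abs_div, abs_of_pos (hpos _ hδt), le_div_iff₀ (hpos _ hδt), abs_mul, abs_of_nonneg
    (sq_nonneg _)] at hcurv
  rw [abs_div, abs_of_pos (hpos _ hδ), abs_mul, abs_of_nonneg (sq_nonneg _),
    div_le_div_iff₀ (by positivity) (hpos _ hδ)]
  calc c * γ δ ≤ c * (2 ^ C * γ (δ * t)) := by gcongr
    _ = 2 ^ C * (c * γ (δ * t)) := by ring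
    _ ≤ 2 ^ C * ((δ * t) ^ 2 * |iteratedDeriv 2 γ (δ * t)|) := by gcongr
    _ = δ ^ 2 * |iteratedDeriv 2 γ (δ * t)| * (t ^ 2 * 2 ^ C) := by ring
    _ ≤ δ ^ 2 * |iteratedDeriv 2 γ (δ * t)| * (4 * 2 ^ C) := by gcongr

lemma isCurvedGraph_const_mul_gammaZ (hγ : ContDiffOn ℝ 2 γ (Ioo 0 1))
    (hcont : ContinuousOn γ (Ici 0)) (hparity : γ.Even ∨ γ.Odd) (hpos : ∀ t ∈ Ioo 0 1, 0 < γ t)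
    (hlog : ∀ t ∈ Ioo 0 1, |t * deriv γ t / γ t| ≤ C) (hc : 0 ≤ c)
    (hcurv : ∀ t ∈ Ioo 0 1, c ≤ |t ^ 2 * iteratedDeriv 2 γ t / γ t|) {l : ℤ} (hl : 2 ≤ l) {u : ℝ}
    (hu : 1 ≤ |u|) : IsCurvedGraph (fun t => u * gammaZ γ l t) (1 / 2) 2 (c / (4 * 2 ^ C)) where
  continuous := (continuous_gammaZ (continuous_of_even_or_odd hparity hcont) l).const_mul u
  even_or_odd := (gammaZ_even_or_odd hparity l).imp (·.const_smul u) (·.const_smul u)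
  contDiffAt t ht := contDiffAt_const.mul (contDiffAt_gammaZ hγ hl ht)
  le_abs_iteratedDeriv_two t ht := by
    rw [iteratedDeriv_const_mul_field, abs_mul]
    exact (le_abs_iteratedDeriv_two_gammaZ (hγ.differentiableOn two_ne_zero) hpos hlog hc hcurv
      hl ht).trans (le_mul_of_one_le_left (abs_nonneg _) hu)

end RescaledCurve

section LocalizedCurveMultiplier

open scoped SchwartzMap FourierTransform

variable {χ g : ℝ → ℂ} {θ : ℝ → ℝ} {a b c κ M : ℝ}

/-- The multiplier `χ(c ξ₁) χ(c ξ₂) ∫ exp(i (ξ₁ t + ξ₂ θ(t))) g(t) dt`: the frequency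
localization at scale `c⁻¹` of the Fourier transform of a density on the graph of `θ`. -/
noncomputable def localizedCurveMultiplier (χ g : ℝ → ℂ) (θ : ℝ → ℝ) (c : ℝ) (ξ : ℝ × ℝ) : ℂ :=
  χ (c * ξ.1) * χ (c * ξ.2) * phaseAverage volume g (fun t => (t, θ t)) ξ

lemma hasCompactSupport_mul_dilation (hχ : HasCompactSupport χ) (hc : c ≠ 0) :
    HasCompactSupport fun ξ : ℝ × ℝ => χ (c * ξ.1) * χ (c * ξ.2) := by
  have htensor : HasCompactSupport fun ξ : ℝ × ℝ => χ ξ.1 * χ ξ.2 :=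
    HasCompactSupport.of_support_subset_isCompact (hχ.isCompact.prod hχ.isCompact) fun ξ hξ =>
      ⟨subset_tsupport _ (left_ne_zero_of_mul hξ), subset_tsupport _ (right_ne_zero_of_mul hξ)⟩
  exact htensor.comp_homeomorph (Homeomorph.smulOfNeZero c hc)

lemma hasTemperateGrowth_localizedCurveMultiplier (hχ : ContDiff ℝ (⊤ : ℕ∞) χ)
    (hχc : HasCompactSupport χ) (hg : Continuous g) (hgc : HasCompactSupport g)
    (hθ : Continuous θ) (hc : c ≠ 0) : (localizedCurveMultiplier χ g θ c).HasTemperateGrowth := by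
  have hsmooth : ContDiff ℝ (⊤ : ℕ∞) fun ξ : ℝ × ℝ => χ (c * ξ.1) * χ (c * ξ.2) := by fun_prop
  exact (hasCompactSupport_mul_dilation hχc hc).mul_right.hasTemperateGrowth
    (hsmooth.mul (contDiff_phaseAverage_graph hg hgc hθ))

lemma localizedCurveMultiplier_eq_phaseAverage (hχ : Continuous χ) (hχi : Integrable χ)
    (hχi' : Integrable (𝓕 χ)) (g : ℝ → ℂ) (θ : ℝ → ℝ) (c : ℝ) :
    localizedCurveMultiplier χ g θ c =
      phaseAverage ((volume.prod volume).prod volume) (fun z => 𝓕⁻ χ z.1.1 * 𝓕⁻ χ z.1.2 * g z.2)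
        fun z => (-2 * Real.pi * z.1.1) • (c, 0) + (-2 * Real.pi * z.1.2) • (0, c) +
          (z.2, θ z.2) := by
  funext ξ
  have hfst := phaseAverage_fourierInv hχ hχi hχi' (c, 0) ξ
  have hsnd := phaseAverage_fourierInv hχ hχi hχi' (0, c) ξ
  simp only [zero_mul, add_zero, zero_add] at hfst hsnd
  rw [localizedCurveMultiplier, ← hfst, ← hsnd, phaseAverage_mul, phaseAverage_mul]

lemma integrable_fourierInv_of_integrable_fourier (hχ : Integrable (𝓕 χ)) :
    Integrable (𝓕⁻ χ) := by
  have hreflect : 𝓕⁻ χ = fun r => 𝓕 χ (-r) := funext (Real.fourierInv_eq_fourier_neg χ)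
  exact hreflect ▸ hχ.comp_neg

lemma eLpNorm_top_op_localizedCurveMultiplier_le (hχ : Continuous χ) (hχi : Integrable χ)
    (hχi' : Integrable (𝓕 χ)) (hg : Integrable g) (hθ : Measurable θ) (c : ℝ) (f : 𝓢(ℝ × ℝ, ℂ)) :
    eLpNorm (op (localizedCurveMultiplier χ g θ c) f) ∞ volume ≤
      (∫⁻ r, ‖𝓕⁻ χ r‖ₑ) ^ 2 * (∫⁻ t, ‖g t‖ₑ) * eLpNorm f ∞ volume := by
  have hinv := integrable_fourierInv_of_integrable_fourier hχi'
  rw [localizedCurveMultiplier_eq_phaseAverage hχ hχi hχi']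
  refine (eLpNorm_top_op_phaseAverage_le ((hinv.mul_prod hinv).mul_prod hg)
    (by fun_prop) f).trans_eq ?_
  congr 1
  simp only [enorm_mul]
  rw [lintegral_prod_mul (f := fun z : ℝ × ℝ => ‖𝓕⁻ χ z.1‖ₑ * ‖𝓕⁻ χ z.2‖ₑ) (by fun_prop)
    hg.aestronglyMeasurable.enorm, lintegral_prod_mul hinv.aestronglyMeasurable.enorm
    hinv.aestronglyMeasurable.enorm, sq]

lemma norm_localizedCurveMultiplier_le (hχ : ∀ t, ‖χ t‖ ≤ M) (ha : 0 < a) (hab : a ≤ b)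
    (hχsupp : Function.support χ ⊆ {t | a ≤ |t|}) (hg : ContDiff ℝ 1 g)
    (hgsupp : Function.support g ⊆ {t | a ≤ |t| ∧ |t| ≤ b}) (hκ : 0 < κ)
    (hθ : IsCurvedGraph θ a b κ) (hc : 0 < c) (ξ : ℝ × ℝ) :
    ‖localizedCurveMultiplier χ g θ c ξ‖ ≤
      M ^ 2 * ((1 + 2 * Real.pi) / √(κ * a) * ∫ t, ‖deriv g t‖) * √c := by
  have : 0 ≤ ∫ t, ‖deriv g t‖ := integral_nonneg fun t => norm_nonneg _
  have hM : 0 ≤ M := (norm_nonneg _).trans (hχ 0)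
  by_cases hξ : χ (c * ξ.2) = 0
  · rw [localizedCurveMultiplier, hξ, mul_zero, zero_mul, norm_zero]
    positivity
  have hξ2 : a / c ≤ |ξ.2| := by
    have hmem : a ≤ |c * ξ.2| := hχsupp hξ
    rwa [abs_mul, abs_of_pos hc, ← div_le_iff₀' hc] at hmem
  have hξ0 : ξ.2 ≠ 0 := abs_pos.1 ((div_pos ha hc).trans_le hξ2)
  have hdecay : ‖phaseAverage volume g (fun t => (t, θ t)) ξ‖ ≤
      (1 + 2 * Real.pi) / √(κ * a) * (∫ t, ‖deriv g t‖) * √c :=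
    calc ‖phaseAverage volume g (fun t => (t, θ t)) ξ‖
        ≤ (1 + 2 * Real.pi) / √(κ * |ξ.2|) * ∫ t, ‖deriv g t‖ :=
          norm_phaseAverage_graph_le hg ha hab hgsupp hκ hθ hξ0
      _ ≤ (1 + 2 * Real.pi) / √(κ * (a / c)) * ∫ t, ‖deriv g t‖ := by gcongr
      _ = _ := by
          rw [← mul_div_assoc, Real.sqrt_div' _ hc.le]
          field_simp
  rw [localizedCurveMultiplier, norm_mul, norm_mul, sq, mul_assoc _ _ √c]
  gcongr
  exacts [hχ _, hχ _]

lemma exists_norm_localizedCurveMultiplier_le (hχ : Continuous χ)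
    (hχsupp : Function.support χ ⊆ {t | a ≤ |t| ∧ |t| ≤ b}) (ha : 0 < a) (hab : a ≤ b)
    (hg : ContDiff ℝ 1 g) (hgsupp : Function.support g ⊆ {t | a ≤ |t| ∧ |t| ≤ b}) (hκ : 0 < κ) :
    ∃ D > 0, ∀ θ : ℝ → ℝ, IsCurvedGraph θ a b κ → ∀ c > 0, ∀ ξ,
      ‖localizedCurveMultiplier χ g θ c ξ‖ ≤ D * √c := by
  obtain ⟨M, hM⟩ := hχ.bounded_above_of_compact_support
    (hasCompactSupport_of_support_subset_annulus hχsupp)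
  have : 0 ≤ ∫ t, ‖deriv g t‖ := integral_nonneg fun t => norm_nonneg _
  refine ⟨M ^ 2 * ((1 + 2 * Real.pi) / √(κ * a) * ∫ t, ‖deriv g t‖) + 1, by positivity,
    fun θ hθ c hc ξ => ?_⟩
  refine (norm_localizedCurveMultiplier_le hM ha hab (fun t ht => (hχsupp ht).1) hg hgsupp hκ hθ
    hc ξ).trans ?_
  gcongr
  exact (lt_add_one _).le

lemma exists_eLpNorm_top_op_localizedCurveMultiplier_le (hχ : ContDiff ℝ (⊤ : ℕ∞) χ)
    (hχc : HasCompactSupport χ) (hg : Integrable g) :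
    ∃ B : ℝ≥0, 0 < B ∧ ∀ θ : ℝ → ℝ, Measurable θ → ∀ (c : ℝ) (f : 𝓢(ℝ × ℝ, ℂ)),
      eLpNorm (op (localizedCurveMultiplier χ g θ c) f) ∞ volume ≤ B * eLpNorm f ∞ volume := by
  have hχi : Integrable χ := hχ.continuous.integrable_of_hasCompactSupport hχc
  have hχi' : Integrable (𝓕 χ) := (𝓕 (hχc.toSchwartzMap hχ)).integrable
  have hfin : (∫⁻ r, ‖𝓕⁻ χ r‖ₑ) ^ 2 * (∫⁻ t, ‖g t‖ₑ) ≠ ∞ :=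
    ENNReal.mul_ne_top (ENNReal.pow_ne_top (integrable_fourierInv_of_integrable_fourier hχi').2.ne)
      hg.2.ne
  refine ⟨((∫⁻ r, ‖𝓕⁻ χ r‖ₑ) ^ 2 * ∫⁻ t, ‖g t‖ₑ).toNNReal + 1, by positivity,
    fun θ hθ c f => ?_⟩
  refine (eLpNorm_top_op_localizedCurveMultiplier_le hχ.continuous hχi hχi' hg hθ c f).trans ?_
  gcongr
  exact (ENNReal.coe_toNNReal hfin).symm.le.trans (ENNReal.coe_le_coe.2 le_self_add)

lemma exists_eLpNorm_op_localizedCurveMultiplier_le (ha : 0 < a) (hab : a ≤ b)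
    (hχ : ContDiff ℝ (⊤ : ℕ∞) χ) (hχsupp : Function.support χ ⊆ {t | a ≤ |t| ∧ |t| ≤ b})
    (hg : ContDiff ℝ 1 g) (hgsupp : Function.support g ⊆ {t | a ≤ |t| ∧ |t| ≤ b}) (hκ : 0 < κ)
    {p : ℝ≥0∞} (hp : 2 ≤ p) :
    ∃ K > 0, ∀ θ : ℝ → ℝ, IsCurvedGraph θ a b κ → ∀ c > 0, ∀ f : 𝓢(ℝ × ℝ, ℂ),
      eLpNorm (op (localizedCurveMultiplier χ g θ c) f) p volume ≤
        ENNReal.ofReal (K * c ^ (1 / p.toReal)) * eLpNorm f p volume := by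
  have hχc := hasCompactSupport_of_support_subset_annulus hχsupp
  have hgc := hasCompactSupport_of_support_subset_annulus hgsupp
  obtain ⟨D, hD, hsymbol⟩ := exists_norm_localizedCurveMultiplier_le hχ.continuous hχsupp ha hab hg
    hgsupp hκ
  obtain ⟨B, hB, htop⟩ := exists_eLpNorm_top_op_localizedCurveMultiplier_le hχ hχc
    (hg.continuous.integrable_of_hasCompactSupport hgc)
  obtain ⟨K, hK, hinterp⟩ := IsSubadditiveOperator.exists_eLpNorm_le (E := ℝ × ℝ) (F := ℂ) (G := ℂ)
    (μ := volume) (ρ := (volume : Measure (ℝ × ℝ))) two_pos hB (p := p) (by simpa using hp)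
  simp only [ENNReal.ofReal_ofNat] at hinterp
  refine ⟨K * D ^ (2 / p.toReal), by positivity, fun θ hθ c hc f => ?_⟩
  have hgrowth :=
    hasTemperateGrowth_localizedCurveMultiplier hχ hχc hg.continuous hgc hθ.continuous hc.ne'
  have hsymbol (ξ) : ‖localizedCurveMultiplier χ g θ c ξ‖ ≤ (D * √c).toNNReal :=
    (hsymbol θ hθ c hc ξ).trans (Real.le_coe_toNNReal _)
  refine (hinterp (D * √c).toNNReal _ (isSubadditiveOperator_op hgrowth)
    (eLpNorm_two_op_le hgrowth hsymbol) (htop θ hθ.continuous.measurable c) f).trans_eq ?_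
  have hpow : (D * √c) ^ (2 / p.toReal) = D ^ (2 / p.toReal) * c ^ (1 / p.toReal) := by
    rw [Real.mul_rpow hD.le (Real.sqrt_nonneg c), Real.sqrt_eq_rpow, ← Real.rpow_mul hc.le]
    ring_nf
  rw [← ENNReal.ofReal.eq_def, ENNReal.ofReal_rpow_of_nonneg (by positivity) (by positivity), hpow,
    ← ENNReal.ofReal_mul hK.le, mul_assoc]

end LocalizedCurveMultiplier

section DyadicMultiplier

open scoped Topology

variable {φ : ℝ → ℝ}

lemma contDiff_ofReal_div {n : WithTop ℕ∞} (hφ : ContDiff ℝ n φ) (hφ0 : ∀ᶠ t in 𝓝 0, φ t = 0) :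
    ContDiff ℝ n fun t => (φ t : ℂ) / t := by
  refine contDiff_iff_contDiffAt.2 fun t => ?_
  have hφC : ContDiff ℝ n fun t => (φ t : ℂ) := Complex.ofRealCLM.contDiff.comp hφ
  rcases eq_or_ne t 0 with rfl | ht
  · have hzero : (fun t => (φ t : ℂ) / t) =ᶠ[𝓝 0] fun _ => 0 :=
      hφ0.mono fun s hs => by simp only [hs, Complex.ofReal_zero, zero_div]
    exact contDiffAt_const.congr_of_eventuallyEq hzero
  · have hinv : ContDiffAt ℝ n (fun t : ℝ => ((t⁻¹ : ℝ) : ℂ)) t :=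
      Complex.ofRealCLM.contDiff.contDiffAt.comp t (contDiffAt_inv ℝ ht)
    simpa only [div_eq_mul_inv, Complex.ofReal_inv] using hφC.contDiffAt.mul hinv

lemma mjl_eq_localizedCurveMultiplier (γ φ : ℝ → ℝ) (j l : ℕ) (u : ℝ) :
    mjl γ φ j l u = localizedCurveMultiplier (fun t => φ t) (fun t => φ t / t)
      (fun t => u * gammaZ γ l t) ((2 : ℝ) ^ (-(j : ℤ))) := by
  funext ξ
  simp only [mjl, localizedCurveMultiplier, phaseAverage, Complex.ofReal_mul, ← Complex.exp_add,
    mul_div_assoc]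
  congr! 5
  ring

end DyadicMultiplier

theorem mjl_fixed_u_bound_general
    (γ : ℝ → ℝ)
    (hγ : ContDiffOn ℝ 2 γ (Ioo 0 1))
    (hcont : ContinuousOn γ (Ici 0))
    (hparity : γ.Even ∨ γ.Odd)
    (hpos : ∀ t ∈ Ioo 0 1, 0 < γ t)
    (hlog : ∃ C, ∀ t ∈ Ioo 0 1, |t * deriv γ t / γ t| ≤ C)
    (hcurv : ∃ c > 0, ∀ t ∈ Ioo 0 1, c ≤ |t ^ 2 * iteratedDeriv 2 γ t / γ t|)
    (φ : ℝ → ℝ) (hφ : ContDiff ℝ (⊤ : ℕ∞) φ)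
    (hφsupp : Function.support φ ⊆ {t : ℝ | 1 / 2 ≤ |t| ∧ |t| ≤ 2})
    (p : ℝ≥0∞) (hp : 2 ≤ p) :
    ∃ C > 0, ∀ j l : ℕ, 2 ≤ l → ∀ u : ℝ, 1 ≤ |u| → ∀ f : SchwartzMap (ℝ × ℝ) ℂ,
      eLpNorm (op (mjl γ φ j l u) f) p volume ≤
        ENNReal.ofReal (C * (2 : ℝ) ^ (-((j : ℝ) / p.toReal))) * eLpNorm f p volume := by
  obtain ⟨C, hlog⟩ := hlog
  obtain ⟨c, hc, hcurv⟩ := hcurv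
  have hφ0 : ∀ᶠ t in nhds 0, φ t = 0 := by
    filter_upwards [Metric.ball_mem_nhds (0 : ℝ) one_half_pos] with t ht
    by_contra hne
    exact (mem_ball_zero_iff.1 ht).not_ge (hφsupp hne).1
  obtain ⟨K, hK, hbound⟩ := exists_eLpNorm_op_localizedCurveMultiplier_le one_half_pos
    (by norm_num : (1 / 2 : ℝ) ≤ 2) (Complex.ofRealCLM.contDiff.comp hφ)
    (fun t ht => hφsupp fun h => ht (by simp [h]))
    ((contDiff_ofReal_div hφ hφ0).of_le (mod_cast le_top))
    (fun t ht => hφsupp fun h => ht (by simp [h])) (κ := c / (4 * 2 ^ C)) (by positivity) hp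
  refine ⟨K, hK, fun j l hl u hu f => ?_⟩
  have hscale : ((2 : ℝ) ^ (-(j : ℤ))) ^ (1 / p.toReal) = 2 ^ (-(j / p.toReal)) := by
    rw [← Real.rpow_intCast, ← Real.rpow_mul two_pos.le]
    push_cast
    ring_nf
  rw [mjl_eq_localizedCurveMultiplier, ← hscale]
  exact hbound _ (isCurvedGraph_const_mul_gammaZ hγ hcont hparity hpos hlog hc.le hcurv
    (mod_cast hl) hu) _ (by positivity) f

/-- Fixed-`u` `L^p` bound for `m_j^l(u,D)`, uniform in `l` and `u`. -/
theorem mjl_fixed_u_bound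
    (γ : ℝ → ℝ)
    (hγ0 : γ 0 = 0)
    (hsmooth : ContDiffOn ℝ (⊤ : ℕ∞) γ (Set.Icc (-1 : ℝ) 1))
    (hparity : (∀ t, γ (-t) = γ t) ∨ (∀ t, γ (-t) = -γ t))
    (hmono : StrictMonoOn γ (Set.Icc (0 : ℝ) 1))
    (hyp1 : ∃ c > (0 : ℝ), ∀ t ∈ Set.Ioc (0 : ℝ) 1,
      c ≤ |deriv (fun s => deriv γ s / deriv (deriv γ) s) t|)
    (hyp2 : ∃ c > (0 : ℝ), ∀ j ∈ ({1, 2} : Set ℕ), ∀ t ∈ Set.Ioc (0 : ℝ) 1,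
      c ≤ |t ^ j * iteratedDeriv j γ t / γ t|)
    (hyp3 : ∃ C : ℝ, ∀ j : ℕ, 1 ≤ j → j ≤ 1000 → ∀ t ∈ Set.Ioc (0 : ℝ) 1,
      |t ^ j * iteratedDeriv j γ t / γ t| ≤ C)
    (hγ1 : γ 1 = 1)
    (hconv : ∀ t ∈ Set.Ioc (0 : ℝ) 1, 0 < iteratedDeriv 2 γ t)
    (hext : ∀ t : ℝ, 1 ≤ t → γ t = (γ t⁻¹)⁻¹)
    (hcont : ContinuousOn γ (Set.Ici (0 : ℝ)))
    (hmono2 : StrictMonoOn γ (Set.Ici (0 : ℝ)))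
    (hsurj : γ '' Set.Ici (0 : ℝ) = Set.Ici (0 : ℝ))
    (φ : ℝ → ℝ) (hφs : ContDiff ℝ (⊤ : ℕ∞) φ) (hφc : HasCompactSupport φ)
    (hφsupp : Function.support φ ⊆ {t : ℝ | 1/2 ≤ |t| ∧ |t| ≤ 2})
    (hφsum : ∀ t : ℝ, t ≠ 0 → HasSum (fun k : ℤ => φ ((2 : ℝ) ^ (-k) * t)) 1)
    (p : ℝ≥0∞) (hp : 2 ≤ p) :
    ∃ C : ℝ, 0 < C ∧ ∃ L₀ : ℕ,
      ∀ j : ℕ, 1 ≤ j → ∀ l : ℕ, L₀ ≤ l → ∀ u ∈ Set.Icc (1 : ℝ) 2,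
      ∀ f : SchwartzMap (ℝ × ℝ) ℂ,
        eLpNorm (op (mjl γ φ j l u) (⇑f)) p volume ≤
          ENNReal.ofReal (C * (2 : ℝ) ^ (-((j : ℝ) / p.toReal))) *
            eLpNorm (⇑f) p volume := by
  obtain ⟨c, hc, hyp2⟩ := hyp2
  obtain ⟨C, hyp3⟩ := hyp3
  have hIoc : Ioo (0 : ℝ) 1 ⊆ Ioc 0 1 := Ioo_subset_Ioc_self
  have hpos (t) (ht : t ∈ Ioo (0 : ℝ) 1) : 0 < γ t :=
    hγ0 ▸ hmono (left_mem_Icc.2 zero_le_one) (Ioo_subset_Icc_self ht) ht.1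
  obtain ⟨K, hK, hbound⟩ := mjl_fixed_u_bound_general γ
    ((hsmooth.mono fun t ht => ⟨by linarith [ht.1], ht.2.le⟩).of_le
      (WithTop.coe_le_coe.2 (le_top : (2 : ℕ∞) ≤ ⊤))) hcont
    hparity hpos ⟨C, fun t ht => by simpa using hyp3 1 le_rfl (by norm_num) t (hIoc ht)⟩
    ⟨c, hc, fun t ht => hyp2 2 (by simp) t (hIoc ht)⟩ φ hφs hφsupp p hp
  exact ⟨K, hK, 2, fun j _ l hl u hu => hbound j l hl u (hu.1.trans (le_abs_self u))⟩
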